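/- Let N₁, N₂, m be positive integers and let X = (X_j)_{1≤j≤N₁+N₂} be a random vector with the multinomial distribution M(m, N₁+N₂), i.e., X_j counts how many of m i.i.d. uniform random draws from {1,…,N₁+N₂} equal j. Let X^{(1)} = (X_j)_{1≤j≤N₁}. Let 1 ≤ q ≤ N₂ and let 𝒥 be a random subset of (N₁, N₁+N₂] of cardinality q that is a (measurable) function of X^{(1)}. Then the random variable max_{j∈𝒥} X_j has the same distribution as max_{N₁<j≤N₁+q} X_j. -/

import Mathlib

open MeasureTheory Filter

noncomputable section

/-- The law of `m` i.i.d. draws, each uniformly distributed on `Fin N`; under this measure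
the vector of counts `(drawCount j)_{j}` is multinomial `M(m, N)`. -/
def uniformDraws (m N : ℕ) : Measure (Fin m → Fin N) :=
  Measure.pi fun _ => ((N : ENNReal))⁻¹ • Measure.count

/-- `X_j`: the number of the `m` draws equal to `j`. -/
def drawCount {m N : ℕ} (j : Fin N) (ω : Fin m → Fin N) : ℕ :=
  (Finset.univ.filter fun k => ω k = j).card

/-!
Let the counts of the observed cells select a permutation of the cells that fixes the observed cells
and carries the fixed index set onto the random one, and relabel all draws by it. The relabelling
leaves the observed counts unchanged, so on each event where these counts take a given value it is a
single deterministic relabelling, which maps the event to itself and preserves the law of the draws.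
Hence the random relabelling preserves that law too, and it turns the maximum over the random set
into the maximum over the fixed one.
-/

theorem exists_perm_map_eq_of_card_eq {α : Type*} {s t : Finset α} (h : s.card = t.card) :
    ∃ σ : Equiv.Perm α, s.map σ.toEmbedding = t ∧ ∀ a, a ∉ s → a ∉ t → σ a = a := by
  classical
  let p : α → Prop := fun a => a ∈ s ∨ a ∈ t
  have hs : ∀ a ∈ s, p a := fun _ => Or.inl
  have ht : ∀ a ∈ t, p a := fun _ => Or.inr
  obtain ⟨τ, hτ⟩ := Equiv.Perm.exists_map_finset_eq (s.subtype p) (t.subtype p) (by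
    rw [Finset.card_subtype, Finset.card_subtype, Finset.filter_true_of_mem hs,
      Finset.filter_true_of_mem ht, h])
  refine ⟨Equiv.Perm.ofSubtype τ, ?_, fun a has hat =>
    Equiv.Perm.ofSubtype_apply_of_not_mem τ (not_or.2 ⟨has, hat⟩)⟩
  have hcomm : (Function.Embedding.subtype p).trans (Equiv.Perm.ofSubtype τ).toEmbedding =
      τ.toEmbedding.trans (Function.Embedding.subtype p) := by
    ext a
    exact Equiv.Perm.ofSubtype_apply_coe τ a
  calc s.map (Equiv.Perm.ofSubtype τ).toEmbedding
      = ((s.subtype p).map τ.toEmbedding).map (Function.Embedding.subtype p) := by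
        rw [Finset.map_map, ← hcomm, ← Finset.map_map, Finset.subtype_map_of_mem hs]
    _ = t := by rw [hτ, Finset.subtype_map_of_mem ht]

theorem measurePreserving_equiv_of_singleton {α β : Type*} [Countable α] [MeasurableSpace α]
    [MeasurableSpace β] [MeasurableSingletonClass α] [MeasurableSingletonClass β]
    {μ : Measure α} {ν : Measure β} (e : α ≃ β) (h : ∀ a, ν {e a} = μ {a}) :
    MeasurePreserving e μ ν := by
  have : Countable β := .of_equiv α e
  have he : Measurable e := .of_discrete
  refine ⟨he, Measure.ext_of_singleton fun b => ?_⟩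
  obtain ⟨a, rfl⟩ := e.surjective b
  rw [Measure.map_apply he (measurableSet_singleton _), h, ← Set.image_singleton,
    e.preimage_image]

section InvariantStatistic

variable {Ω β : Type*} [MeasurableSpace Ω] [MeasurableSpace β] [Countable β]
  [MeasurableSingletonClass β] {μ : Measure Ω} {X : Ω → β}

theorem tsum_measure_preimage_singleton_inter (hX : Measurable X) (s : Set Ω) :
    ∑' b, μ (X ⁻¹' {b} ∩ s) = μ s := by
  have hfiber (b : β) : MeasurableSet (X ⁻¹' {b}) := hX (measurableSet_singleton b)
  calc ∑' b, μ (X ⁻¹' {b} ∩ s)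
      = ∑' b : (Set.univ : Set β), μ.restrict s (X ⁻¹' {(b : β)}) := by
        rw [tsum_univ fun b => μ.restrict s (X ⁻¹' {b})]
        exact tsum_congr fun b => (Measure.restrict_apply (hfiber b)).symm
    _ = μ s := by
        rw [tsum_measure_preimage_singleton Set.countable_univ fun b _ => hfiber b,
          Set.preimage_univ, Measure.restrict_apply_univ]

theorem measurePreserving_apply_of_invariant (hX : Measurable X) {f : β → Ω → Ω}
    (hf : ∀ b, MeasurePreserving (f b) μ μ) (hXf : ∀ b ω, X (f b ω) = X ω) :
    MeasurePreserving (fun ω => f (X ω) ω) μ μ := by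
  have hmeas : Measurable fun ω => f (X ω) ω :=
    (measurable_from_prod_countable_right fun b => (hf b).measurable :
      Measurable fun p : β × Ω => f p.1 p.2).comp (hX.prodMk measurable_id)
  refine ⟨hmeas, Measure.ext fun s hs => ?_⟩
  have hfiber (b : β) :
      X ⁻¹' {b} ∩ (fun ω => f (X ω) ω) ⁻¹' s = f b ⁻¹' (X ⁻¹' {b} ∩ s) := by
    ext ω
    simp only [Set.mem_inter_iff, Set.mem_preimage, Set.mem_singleton_iff, hXf]
    exact and_congr_right fun hω => by rw [hω]
  calc μ.map (fun ω => f (X ω) ω) s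
      = ∑' b, μ (X ⁻¹' {b} ∩ (fun ω => f (X ω) ω) ⁻¹' s) := by
        rw [Measure.map_apply hmeas hs, tsum_measure_preimage_singleton_inter hX]
    _ = ∑' b, μ (X ⁻¹' {b} ∩ s) := by
        refine tsum_congr fun b => ?_
        rw [hfiber, (hf b).measure_preimage
          ((hX (measurableSet_singleton b)).inter hs).nullMeasurableSet]
    _ = μ s := tsum_measure_preimage_singleton_inter hX s

end InvariantStatistic

section CellCount

variable {ι α : Type*} [Fintype ι] [DecidableEq α]

/-- The number of the draws `ω` that fall in the cell `j`, for draws indexed by any finite type and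
cells forming any type; `drawCount` is the case of `m` draws from `Fin N`. -/
def cellCount (j : α) (ω : ι → α) : ℕ :=
  (Finset.univ.filter fun k => ω k = j).card

theorem cellCount_comp_of_injective {β : Type*} [DecidableEq β] {f : α → β}
    (hf : Function.Injective f) (j : α) (ω : ι → α) :
    cellCount (f j) (f ∘ ω) = cellCount j ω := by
  simp only [cellCount, Function.comp_apply, hf.eq_iff]

theorem sup_map_cellCount_comp {β : Type*} [DecidableEq β] (f : α ↪ β) (s : Finset α)
    (ω : ι → α) : ((s.map f).sup fun j => cellCount j (f ∘ ω)) = s.sup fun j => cellCount j ω := by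
  rw [Finset.sup_map]
  exact Finset.sup_congr rfl fun j _ => cellCount_comp_of_injective f.injective j ω

variable [Countable α] [MeasurableSpace α] [MeasurableSingletonClass α]

theorem max_over_random_set_distribution_general {κ : Type*} [Finite κ] (P : Measure α)
    [SigmaFinite P] (observed : κ → α)
    (hP : ∀ a ∉ Set.range observed, ∀ b ∉ Set.range observed, P {a} = P {b})
    (T : Finset α) (hT : ∀ j ∈ T, j ∉ Set.range observed)
    (J : (κ → ℕ) → Finset α) (hJ : ∀ x, ∀ j ∈ J x, j ∉ Set.range observed)
    (hJcard : ∀ x, (J x).card = T.card) :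
    ProbabilityTheory.IdentDistrib
      (fun ω : ι → α =>
        (fun i => cellCount (observed i) ω,
          (J fun i => cellCount (observed i) ω).sup fun j => cellCount j ω))
      (fun ω : ι → α => (fun i => cellCount (observed i) ω, T.sup fun j => cellCount j ω))
      (Measure.pi fun _ => P) (Measure.pi fun _ => P) := by
  choose σ hmap hfix using fun x => exists_perm_map_eq_of_card_eq (hJcard x).symm
  let X : (ι → α) → κ → ℕ := fun ω i => cellCount (observed i) ω
  have hσobs (x : κ → ℕ) (i : κ) : σ x (observed i) = observed i :=
    hfix x _ (fun h => hT _ h ⟨i, rfl⟩) fun h => hJ x _ h ⟨i, rfl⟩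
  have hσP (x : κ → ℕ) : MeasurePreserving (σ x) P P := by
    refine measurePreserving_equiv_of_singleton _ fun a => ?_
    by_cases ha : a ∈ Set.range observed
    · obtain ⟨i, rfl⟩ := ha
      rw [hσobs]
    · refine hP _ ?_ _ ha
      rintro ⟨i, hi⟩
      exact ha ⟨i, (σ x).injective ((hσobs x i).trans hi)⟩
  have hXσ (x : κ → ℕ) (ω : ι → α) : X (σ x ∘ ω) = X ω := by
    funext i
    simpa only [hσobs] using cellCount_comp_of_injective (σ x).injective (observed i) ω
  have hrelabel : MeasurePreserving (fun ω : ι → α => σ (X ω) ∘ ω)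
      (Measure.pi fun _ => P) (Measure.pi fun _ => P) :=
    measurePreserving_apply_of_invariant (f := fun x ω => σ x ∘ ω) .of_discrete
      (fun x => measurePreserving_pi (f := fun _ => σ x) _ _ fun _ => hσP x) hXσ
  refine ⟨Measurable.of_discrete.aemeasurable, Measurable.of_discrete.aemeasurable, ?_⟩
  conv_lhs => rw [← hrelabel.map_eq]
  rw [Measure.map_map .of_discrete hrelabel.measurable]
  congr 1
  funext ω
  change (X (σ (X ω) ∘ ω), (J (X (σ (X ω) ∘ ω))).sup fun j => cellCount j (σ (X ω) ∘ ω)) = _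
  rw [hXσ, ← hmap (X ω)]
  exact congrArg (Prod.mk (X ω)) (sup_map_cellCount_comp (σ (X ω)).toEmbedding T ω)

end CellCount

theorem card_filter_fin_val_mem_Ico {a b n : ℕ} (hb : b ≤ n) :
    (Finset.univ.filter fun j : Fin n => a ≤ (j : ℕ) ∧ (j : ℕ) < b).card = b - a := by
  rw [← Nat.card_Ico, ← Finset.card_map Fin.valEmbedding]
  congr 1
  ext k
  simp only [Finset.mem_map, Finset.mem_filter, Finset.mem_univ, true_and,
    Fin.valEmbedding_apply, Finset.mem_Ico]
  exact ⟨fun ⟨_, hj, hk⟩ => hk ▸ hj, fun hk => ⟨⟨k, hk.2.trans_le hb⟩, hk, rfl⟩⟩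

theorem notMem_range_castAdd_of_le {m n : ℕ} {j : Fin (m + n)} (h : m ≤ (j : ℕ)) :
    j ∉ Set.range (Fin.castAdd n : Fin m → Fin (m + n)) := by
  rintro ⟨i, rfl⟩
  exact h.not_gt i.isLt

/-- **Lemma on random index sets.**  Let `X = (X_j)_{1 ≤ j ≤ N₁+N₂}` be multinomial
`M(m, N₁+N₂)` and let `𝒥` be a random subset of the second block `(N₁, N₁+N₂]` of
cardinality `q` (`1 ≤ q ≤ N₂`) determined by `X⁽¹⁾ = (X_j)_{j ≤ N₁}`.  Then
`max_{j ∈ 𝒥} X_j` and `max_{N₁ < j ≤ N₁+q} X_j` are equidistributed. -/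
theorem max_over_random_set_distribution (N₁ N₂ m q : ℕ)
    (hN₁ : 0 < N₁) (hN₂ : 0 < N₂) (hm : 0 < m) (hq1 : 1 ≤ q) (hq2 : q ≤ N₂)
    (J : (Fin N₁ → ℕ) → Finset (Fin (N₁ + N₂)))
    (hJmem : ∀ x : Fin N₁ → ℕ, ∀ j ∈ J x, N₁ ≤ (j : ℕ))
    (hJcard : ∀ x : Fin N₁ → ℕ, (J x).card = q) :
    Measure.map
      (fun ω : Fin m → Fin (N₁ + N₂) =>
        (J fun i : Fin N₁ => drawCount (Fin.castAdd N₂ i) ω).sup fun j => drawCount j ω)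
      (uniformDraws m (N₁ + N₂)) =
    Measure.map
      (fun ω : Fin m → Fin (N₁ + N₂) =>
        (Finset.univ.filter fun j : Fin (N₁ + N₂) => N₁ ≤ (j : ℕ) ∧ (j : ℕ) < N₁ + q).sup
          fun j => drawCount j ω)
      (uniformDraws m (N₁ + N₂)) := by
  have hN : ((N₁ + N₂ : ℕ) : ENNReal)⁻¹ ≠ ⊤ := by simp [hN₁.ne']
  have := (Measure.count : Measure (Fin (N₁ + N₂))).smul_finite hN
  have hcard := card_filter_fin_val_mem_Ico (a := N₁) (Nat.add_le_add_left hq2 N₁)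
  exact ((max_over_random_set_distribution_general
    (((N₁ + N₂ : ℕ) : ENNReal)⁻¹ • Measure.count) (Fin.castAdd N₂) (by simp)
    (Finset.univ.filter fun j : Fin (N₁ + N₂) => N₁ ≤ (j : ℕ) ∧ (j : ℕ) < N₁ + q)
    (fun j hj => notMem_range_castAdd_of_le (Finset.mem_filter.1 hj).2.1) J
    (fun x j hj => notMem_range_castAdd_of_le (hJmem x j hj))
    fun x => by rw [hJcard, hcard, Nat.add_sub_cancel_left]).comp measurable_snd).map_eq

end
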